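/- In every execution of the Hemlock transition-system model, for every lock L: if thread T_i is the next thread to execute the entry doorstep for L after thread T_j executes the entry doorstep for L, then T_i enters the critical section protected by L after T_j has completed its critical section protected by L. -/

import Mathlib

namespace Hemlock

/-- Program counter locations of a thread in the Hemlock algorithm. -/
inductive PC where
  | remainder  -- in the remainder section
  | entrySpin  -- in the entry code, spinning on the predecessor's Grant field
  | crit       -- in the critical section
  | exitCAS    -- in the exit code, about to perform the CAS on Tail
  | exitDoor   -- in the exit code, about to perform the exit doorstep (write Grant self := some L)
  | exitSpin   -- in the exit code, spinning on its own Grant field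
deriving DecidableEq

/-- A global state of the Hemlock transition system. -/
structure St (Thread Lock : Type) where
  Tail : Lock → Option Thread        -- the Tail field of each lock
  Grant : Thread → Option Lock       -- the Grant field of each thread
  pc : Thread → PC                   -- program counter of each thread
  lk : Thread → Option Lock          -- the lock currently being acquired/released by each thread
  pred : Thread → Option Thread      -- value returned by each thread's last SWAP

variable {Thread Lock : Type} [DecidableEq Thread] [DecidableEq Lock]

/-- The initial state: all Tail and Grant fields are none, all threads in the remainder. -/
def initSt : St Thread Lock :=
  ⟨fun _ => none, fun _ => none, fun _ => .remainder, fun _ => none, fun _ => none⟩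

/-- One atomic transition of thread `t`. -/
inductive Step (t : Thread) : St Thread Lock → St Thread Lock → Prop where
  /-- a step inside the remainder section -/
  | remainderStay (s : St Thread Lock) (h : s.pc t = .remainder) :
      Step t s s
  /-- the entry doorstep for lock `L`: atomic SWAP on `Tail L`, storing the old value in `pred`;
      if the SWAP returned `none` the thread enters the critical section, else it spins -/
  | doorstep (s : St Thread Lock) (L : Lock) (h : s.pc t = .remainder) :
      Step t s ⟨Function.update s.Tail L (some t), s.Grant,
        Function.update s.pc t (if s.Tail L = none then .crit else .entrySpin),
        Function.update s.lk t (some L),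
        Function.update s.pred t (s.Tail L)⟩
  /-- entry-code busy-wait loop: read `Grant p`; it is not yet `some L`, keep spinning -/
  | spinWait (s : St Thread Lock) (p : Thread) (L : Lock)
      (h : s.pc t = .entrySpin) (hp : s.pred t = some p) (hl : s.lk t = some L)
      (hg : s.Grant p ≠ some L) :
      Step t s s
  /-- entry-code busy-wait loop: read `Grant p = some L`; write `Grant p := none`
      and enter the critical section -/
  | spinAcquire (s : St Thread Lock) (p : Thread) (L : Lock)
      (h : s.pc t = .entrySpin) (hp : s.pred t = some p) (hl : s.lk t = some L)
      (hg : s.Grant p = some L) :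
      Step t s ⟨s.Tail, Function.update s.Grant p none,
        Function.update s.pc t .crit, s.lk, s.pred⟩
  /-- a step inside the critical section -/
  | critStay (s : St Thread Lock) (h : s.pc t = .crit) :
      Step t s s
  /-- leave the critical section and begin the exit code -/
  | exitStart (s : St Thread Lock) (h : s.pc t = .crit) :
      Step t s ⟨s.Tail, s.Grant, Function.update s.pc t .exitCAS, s.lk, s.pred⟩
  /-- successful CAS: `Tail L = some self`, so set `Tail L := none` and
      complete the exit code, returning to the remainder section -/
  | casSucc (s : St Thread Lock) (L : Lock)
      (h : s.pc t = .exitCAS) (hl : s.lk t = some L) (ht : s.Tail L = some t) :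
      Step t s ⟨Function.update s.Tail L none, s.Grant,
        Function.update s.pc t .remainder, Function.update s.lk t none, s.pred⟩
  /-- failed CAS: `Tail L ≠ some self`; proceed to the exit doorstep -/
  | casFail (s : St Thread Lock) (L : Lock)
      (h : s.pc t = .exitCAS) (hl : s.lk t = some L) (ht : s.Tail L ≠ some t) :
      Step t s ⟨s.Tail, s.Grant, Function.update s.pc t .exitDoor, s.lk, s.pred⟩
  /-- the exit doorstep: write `Grant self := some L` and start spinning on `Grant self` -/
  | exitDoorstep (s : St Thread Lock) (L : Lock)
      (h : s.pc t = .exitDoor) (hl : s.lk t = some L) :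
      Step t s ⟨s.Tail, Function.update s.Grant t (some L),
        Function.update s.pc t .exitSpin, s.lk, s.pred⟩
  /-- exit-code busy-wait loop: read `Grant self`; it is not yet `none`, keep spinning -/
  | exitSpinWait (s : St Thread Lock) (h : s.pc t = .exitSpin) (hg : s.Grant t ≠ none) :
      Step t s s
  /-- exit-code busy-wait loop: read `Grant self = none`; complete the exit code,
      returning to the remainder section -/
  | exitDone (s : St Thread Lock) (h : s.pc t = .exitSpin) (hg : s.Grant t = none) :
      Step t s ⟨s.Tail, s.Grant, Function.update s.pc t .remainder,
        Function.update s.lk t none, s.pred⟩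

/-- An execution of the Hemlock transition system: an infinite sequence of states starting
    from the initial state, where each step is one transition of the scheduled thread;
    every thread whose program counter is in the entry, exit or critical section eventually
    takes another step, and every thread leaves each critical section after finitely
    many steps. -/
structure Execution (Thread Lock : Type) [DecidableEq Thread] [DecidableEq Lock]
    [Fintype Thread] where
  states : ℕ → St Thread Lock
  sched : ℕ → Thread
  init : states 0 = initSt
  steps : ∀ n, Step (sched n) (states n) (states (n + 1))
  fair : ∀ n t, (states n).pc t ≠ PC.remainder → ∃ m, n ≤ m ∧ sched m = t
  critFinite : ∀ n t, (states n).pc t = PC.crit → ∃ m, n ≤ m ∧ (states m).pc t ≠ PC.crit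

variable [Fintype Thread]

/-- Thread `t` executes the entry doorstep (the SWAP) for lock `L` at time `n`. -/
def doorstepAt (E : Execution Thread Lock) (n : ℕ) (t : Thread) (L : Lock) : Prop :=
  E.sched n = t ∧ (E.states n).pc t = PC.remainder ∧
    (E.states (n + 1)).pc t ≠ PC.remainder ∧ (E.states (n + 1)).lk t = some L

/-- Thread `t` performs the CAS step of the exit code for lock `L` at time `n`
    (successful or not). -/
def casAt (E : Execution Thread Lock) (n : ℕ) (t : Thread) (L : Lock) : Prop :=
  E.sched n = t ∧ (E.states n).pc t = PC.exitCAS ∧ (E.states n).lk t = some L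

/-- Thread `t` performs the exit doorstep (the write `Grant t := some L`) at time `n`. -/
def exitDoorAt (E : Execution Thread Lock) (n : ℕ) (t : Thread) (L : Lock) : Prop :=
  E.sched n = t ∧ (E.states n).pc t = PC.exitDoor ∧ (E.states n).lk t = some L

/-- Thread `t` is in the critical section protected by `L` in state `s`. -/
def inCS (s : St Thread Lock) (t : Thread) (L : Lock) : Prop :=
  s.pc t = PC.crit ∧ s.lk t = some L

/-- Thread `t` is in the entry code for lock `L` in state `s`. -/
def inEntry (s : St Thread Lock) (t : Thread) (L : Lock) : Prop :=
  s.pc t = PC.entrySpin ∧ s.lk t = some L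

/-- Thread `t` enters the critical section protected by `L` at step `m`. -/
def entersCSAt (E : Execution Thread Lock) (m : ℕ) (t : Thread) (L : Lock) : Prop :=
  E.sched m = t ∧ (E.states m).pc t ≠ PC.crit ∧
    (E.states (m + 1)).pc t = PC.crit ∧ (E.states (m + 1)).lk t = some L

/-- Thread `t` completes its critical section protected by `L` at step `k`
    (leaving the critical section and beginning the exit code). -/
def exitsCSAt (E : Execution Thread Lock) (k : ℕ) (t : Thread) (L : Lock) : Prop :=
  E.sched k = t ∧ (E.states k).pc t = PC.crit ∧ (E.states k).lk t = some L ∧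
    (E.states (k + 1)).pc t ≠ PC.crit

/-- Thread `t` completes the exit code for lock `L` at step `k`
    (returning to the remainder section). -/
def completesExitAt (E : Execution Thread Lock) (k : ℕ) (t : Thread) (L : Lock) : Prop :=
  E.sched k = t ∧ (E.states k).lk t = some L ∧
    (E.states k).pc t ≠ PC.remainder ∧ (E.states (k + 1)).pc t = PC.remainder

/-- `m` is the first time at or after `n` at which thread `t` enters the
    critical section protected by `L`. -/
def firstEntryAfter (E : Execution Thread Lock) (n m : ℕ) (t : Thread) (L : Lock) : Prop :=
  n ≤ m ∧ entersCSAt E m t L ∧ ∀ k, n ≤ k → k < m → ¬ entersCSAt E k t L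

/-- At time `n`, thread `T` is spinning in the entry code waiting for `Grant w`
    to become `some L`: its next step reads `Grant w` inside the entry-code
    busy-wait loop with current lock `L` and `pred = some w`. -/
def spinningEntryFor (E : Execution Thread Lock) (n : ℕ) (T w : Thread) (L : Lock) : Prop :=
  (E.states n).pc T = PC.entrySpin ∧ (E.states n).pred T = some w ∧
    (E.states n).lk T = some L

/-- At time `n`, thread `T` is spinning on the word `Grant w`: its next step reads
    `Grant w` inside one of the two busy-wait loops (the entry-code loop with
    `pred = some w`, or the exit-code loop executed by `w` itself). -/
def spinningOn (E : Execution Thread Lock) (n : ℕ) (T w : Thread) : Prop :=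
  ((E.states n).pc T = PC.entrySpin ∧ (E.states n).pred T = some w) ∨
    (T = w ∧ (E.states n).pc T = PC.exitSpin)

/-- Lock `L` is associated with thread `T` at time `n`: `T` has executed the entry
    doorstep for `L` and has not yet completed the exit code for `L`. -/
def associated (E : Execution Thread Lock) (n : ℕ) (T : Thread) (L : Lock) : Prop :=
  ∃ m, m < n ∧ doorstepAt E m T L ∧ ∀ k, m < k → k < n → ¬ completesExitAt E k T L

theorem grant_step {t : Thread} {s s' : St Thread Lock} (h : Step t s s')
    (hi : ∀ u, s.Grant u ≠ none → s.pc u = PC.exitSpin) :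
    ∀ u, s'.Grant u ≠ none → s'.pc u = PC.exitSpin := by
  intro u hu
  have := hi u
  cases h <;> (try simp only [Function.update_apply] at *) <;> grind

theorem grant_inv (E : Execution Thread Lock) (n : ℕ) :
    ∀ u, (E.states n).Grant u ≠ none → (E.states n).pc u = PC.exitSpin := by
  induction n with
  | zero => rw [E.init]; intro u hu; simp [initSt] at hu
  | succ n ih => exact grant_step (E.steps n) ih

theorem busy_step {t u : Thread} {L : Lock} {s s' : St Thread Lock} (h : Step t s s')
    (hp : s.pc u = PC.entrySpin ∨ s.pc u = PC.crit) (hl : s.lk u = some L)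
    (hx : ¬ (t = u ∧ s.pc u = PC.crit ∧ s.lk u = some L ∧ s'.pc u ≠ PC.crit)) :
    (s'.pc u = PC.entrySpin ∨ s'.pc u = PC.crit) ∧ s'.lk u = some L := by
  cases h <;> (try simp only [Function.update_apply] at *) <;> grind

theorem tail_step {t u : Thread} {L : Lock} {s s' : St Thread Lock} (h : Step t s s')
    (hp : s.pc u = PC.entrySpin ∨ s.pc u = PC.crit) (ht : s.Tail L = some u)
    (hx : ¬ (s.pc t = PC.remainder ∧ s'.pc t ≠ PC.remainder ∧ s'.lk t = some L)) :
    s'.Tail L = some u := by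
  cases h <;> (try simp only [Function.update_apply] at *) <;> grind

theorem door_step {t : Thread} {L : Lock} {s s' : St Thread Lock} (h : Step t s s')
    (hp : s.pc t = PC.remainder) (hp' : s'.pc t ≠ PC.remainder) (hl : s'.lk t = some L) :
    s'.Tail L = some t ∧ s'.pred t = s.Tail L ∧
      s'.pc t = (if s.Tail L = none then PC.crit else PC.entrySpin) := by
  cases h <;> (try simp only [Function.update_apply] at *) <;> grind

theorem spin_step {t u p : Thread} {L : Lock} {s s' : St Thread Lock} (h : Step t s s')
    (hp : s.pc u = PC.entrySpin) (hl : s.lk u = some L) (hq : s.pred u = some p) :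
    (s'.pc u = PC.entrySpin ∧ s'.lk u = some L ∧ s'.pred u = some p) ∨
      (t = u ∧ s'.pc u = PC.crit ∧ s'.lk u = some L ∧ s.Grant p = some L) := by
  cases h <;> (try simp only [Function.update_apply] at *) <;> grind

/-- If `Ti` is the next thread to execute the entry doorstep for `L` after `Tj`,
then `Ti` enters the critical section protected by `L` only after `Tj` has completed
its critical section protected by `L`. -/
theorem no_skip_over {Thread Lock : Type} [DecidableEq Thread] [DecidableEq Lock]
    [Fintype Thread] (E : Execution Thread Lock) (L : Lock) (Ti Tj : Thread)
    (ni nj mi : ℕ)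
    (hdj : doorstepAt E nj Tj L) (hdi : doorstepAt E ni Ti L) (hord : nj < ni)
    (hnext : ∀ k T, nj < k → k < ni → ¬ doorstepAt E k T L)
    (hmi : ni ≤ mi) (hent : entersCSAt E mi Ti L)
    (hfirst : ∀ k, ni ≤ k → k < mi → ¬ entersCSAt E k Ti L) :
    ∃ k, nj < k ∧ k < mi ∧ exitsCSAt E k Tj L := by
  by_contra hno
  push Not at hno
  obtain ⟨hj1, hj2, hj3, hj4⟩ := hdj
  obtain ⟨hi1, hi2, hi3, hi4⟩ := hdi
  obtain ⟨he1, he2, he3, he4⟩ := hent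
  have hsj := door_step (hj1 ▸ E.steps nj) hj2 hj3 hj4
  have busy : ∀ n, nj + 1 ≤ n → n ≤ mi →
      ((E.states n).pc Tj = PC.entrySpin ∨ (E.states n).pc Tj = PC.crit) ∧
        (E.states n).lk Tj = some L := by
    intro n hn
    induction n, hn using Nat.le_induction with
    | base => intro _; refine ⟨?_, hj4⟩; rw [hsj.2.2]; split <;> simp
    | succ n hn ih =>
      intro hle
      obtain ⟨h1, h2⟩ := ih (by omega)
      exact busy_step (E.steps n) h1 h2 (hno n (by omega) (by omega))
  have tail : ∀ n, nj + 1 ≤ n → n ≤ ni → (E.states n).Tail L = some Tj := by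
    intro n hn
    induction n, hn using Nat.le_induction with
    | base => intro _; exact hsj.1
    | succ n hn ih =>
      intro hle
      exact tail_step (E.steps n) (busy n hn (by omega)).1 (ih (by omega))
        (fun h => hnext n (E.sched n) (by omega) (by omega) ⟨rfl, h⟩)
  have hsi := door_step (hi1 ▸ E.steps ni) hi2 hi3 hi4
  rw [tail ni hord le_rfl] at hsi
  have spin : ∀ n, ni + 1 ≤ n → n ≤ mi → (E.states n).pc Ti = PC.entrySpin ∧
      (E.states n).lk Ti = some L ∧ (E.states n).pred Ti = some Tj := by
    intro n hn
    induction n, hn using Nat.le_induction with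
    | base => intro _; exact ⟨by simpa using hsi.2.2, hi4, hsi.2.1⟩
    | succ n hn ih =>
      intro hle
      obtain ⟨h1, h2, h3⟩ := ih (by omega)
      rcases spin_step (E.steps n) h1 h2 h3 with h | ⟨h, h', h'', _⟩
      · exact h
      · exact absurd ⟨h, by simp [h1], h', h''⟩ (hfirst n (by omega) (by omega))
  rcases hmi.eq_or_lt with h | h
  · subst h
    have := hsi.2.2
    rw [he3] at this
    simp at this
  · obtain ⟨h1, h2, h3⟩ := spin mi h le_rfl
    rcases spin_step (E.steps mi) h1 h2 h3 with h4 | ⟨_, _, _, h4⟩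
    · rw [he3] at h4; simp at h4
    · have h5 := grant_inv E mi Tj (by simp [h4])
      have h6 := (busy mi (by omega) le_rfl).1
      rw [h5] at h6
      simp at h6

end Hemlock
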